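/- Let (g,A) be a compatible pair over a field k of characteristic 0 and F an associative k-algebra. Then the refined upper bound overline(g,A)(F) = F ⊗ g + Σ ( I_{k₁}^{ℓ₁+1}(F)·I_{k₂}^{ℓ₂+1}(F) ⊗ [J_{ℓ₁}^{k₁+1}, J_{ℓ₂}^{k₂+1}] + [I_{k₁}^{ℓ₁+1}(F), I_{k₂}^{ℓ₂+1}(F)] ⊗ J_{ℓ₂}^{k₂+1}·J_{ℓ₁}^{k₁+1} ), where the sum is over all k₁,k₂,ℓ₁,ℓ₂ ≥ 0 and J_k^ℓ = I_k^ℓ(A,g), is a Lie subalgebra of F ⊗ A, and one has the chain of inclusions (g,A)(F) ⊆ overline(g,A)(F) ⊆ tilde(g,A)(F), where tilde(g,A)(F) = F ⊗ g + Σ_{k≥1} ( I_k(F) ⊗ [g, g^{k+1}] + [F, I_{k−1}(F)] ⊗ g^{k+1} ). -/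

import Mathlib

open Submodule TensorProduct

variable (K : Type*) [Field K]

/-- The span of all products `a * b`, `a ∈ S`, `b ∈ T` (the subspace `S·T`). -/
def pSpan {R : Type*} [NonUnitalRing R] [Module K R] (S T : Submodule K R) : Submodule K R :=
  Submodule.span K {x | ∃ a ∈ S, ∃ b ∈ T, x = a * b}

/-- The span of all commutators `a * b - b * a`, `a ∈ S`, `b ∈ T` (the subspace `[S, T]`). -/
def bSpan {R : Type*} [NonUnitalRing R] [Module K R] (S T : Submodule K R) : Submodule K R :=
  Submodule.span K {x | ∃ a ∈ S, ∃ b ∈ T, x = a * b - b * a}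

/-- The `k`-th commutator space `S^(k)`: `S^(0) = S`, `S^(k) = [S, S^(k-1)]`.
For `S = ⊤` this is the commutator space `F^(k)` of the algebra. -/
def cSp {R : Type*} [NonUnitalRing R] [Module K R] (S : Submodule K R) : ℕ → Submodule K R
  | 0 => S
  | (k+1) => bSpan K S (cSp S k)

/-- `IklS K S ℓ k` is `I_k^ℓ(R, S)`: the sum of `S^(λ₁) ⋯ S^(λ_ℓ)` over
`λ₁ + ⋯ + λ_ℓ = k`, defined via the recursion `I_k^1 = S^(k)`,
`I_k^ℓ = Σ_{0 ≤ i ≤ k} S^(i) · I_{k-i}^{ℓ-1}`.  The first argument is the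
superscript `ℓ`, the second the subscript `k`; the (unused) value at `ℓ = 0` is `⊥`.
For `S = ⊤` this is `I_k^ℓ(F)`. -/
def IklS {R : Type*} [NonUnitalRing R] [Module K R] (S : Submodule K R) :
    ℕ → ℕ → Submodule K R
  | 0, _ => ⊥
  | 1, k => cSp K S k
  | (ℓ+2), k => ∑ i ∈ Finset.range (k+1), pSpan K (cSp K S i) (IklS S (ℓ+1) (k-i))

/-- `I_k^{≤ℓ}(F) = Σ_{1 ≤ ℓ' ≤ ℓ} I_k^{ℓ'}(F)`. -/
def Ikle {R : Type*} [NonUnitalRing R] [Module K R] (ℓ k : ℕ) : Submodule K R :=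
  ∑ ℓ' ∈ Finset.Icc 1 ℓ, IklS K (⊤ : Submodule K R) ℓ' k

/-- `I_k(F) = Σ_{ℓ ≥ 1} I_k^ℓ(F)`. -/
def Ik (R : Type*) [NonUnitalRing R] [Module K R] (k : ℕ) : Submodule K R :=
  ⨆ ℓ : ℕ, IklS K (⊤ : Submodule K R) (ℓ + 1) k

/-- `g^n`: the span of all products of `n` elements of `g` (set to `⊥` for `n = 0`). -/
def gPow {R : Type*} [NonUnitalRing R] [Module K R] (g : Submodule K R) : ℕ → Submodule K R
  | 0 => ⊥
  | 1 => g
  | (n+2) => pSpan K g (gPow g (n+1))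

/-- The Lie subalgebra (under the commutator bracket) generated by a subspace `S`:
the smallest subspace containing `S` and closed under `(x, y) ↦ x * y - y * x`. -/
def lieGen {R : Type*} [NonUnitalRing R] [Module K R] (S : Submodule K R) : Submodule K R :=
  sInf {T | S ≤ T ∧ ∀ x ∈ T, ∀ y ∈ T, x * y - y * x ∈ T}

/-- The subspace `S ⊗ T` of `F ⊗[K] A`: the span of all pure tensors `f ⊗ a`
with `f ∈ S`, `a ∈ T`. -/
def tSpan {F A : Type*} [AddCommGroup F] [Module K F] [AddCommGroup A] [Module K A]
    (S : Submodule K F) (T : Submodule K A) : Submodule K (F ⊗[K] A) :=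
  Submodule.span K {z | ∃ f ∈ S, ∃ a ∈ T, z = f ⊗ₜ[K] a}

/-- The current Lie algebra `(g, A)(F)`: the Lie subalgebra of `F ⊗ A` (with the
commutator bracket) generated by `F ⊗ g`. -/
def currentLie {F A : Type*} [NonUnitalRing F] [Module K F] [SMulCommClass K F F]
    [IsScalarTower K F F] [Ring A] [Algebra K A] (g : Submodule K A) :
    Submodule K (F ⊗[K] A) :=
  lieGen K (tSpan K (⊤ : Submodule K F) g)

variable {F A : Type*}

/-- The upper bound `tilde(g,A)(F) = F ⊗ g + Σ_{k ≥ 1} (I_k(F) ⊗ [g, g^{k+1}] +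
[F, I_{k-1}(F)] ⊗ g^{k+1})`. -/
def tildeUB (K : Type*) [Field K] [NonUnitalRing F] [Module K F]
    [Ring A] [Algebra K A] (g : Submodule K A) : Submodule K (F ⊗[K] A) :=
  tSpan K (⊤ : Submodule K F) g ⊔
    ⨆ k : ℕ, (tSpan K (Ik K F (k + 1)) (bSpan K g (gPow K g (k + 2))) ⊔
      tSpan K (bSpan K (⊤ : Submodule K F) (Ik K F k)) (gPow K g (k + 2)))

/-- The refined upper bound `overline(g,A)(F) = F ⊗ g +
Σ_{k₁,k₂,ℓ₁,ℓ₂ ≥ 0} ( I_{k₁}^{ℓ₁+1}·I_{k₂}^{ℓ₂+1} ⊗ [J_{ℓ₁}^{k₁+1}, J_{ℓ₂}^{k₂+1}]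
+ [I_{k₁}^{ℓ₁+1}, I_{k₂}^{ℓ₂+1}] ⊗ J_{ℓ₂}^{k₂+1}·J_{ℓ₁}^{k₁+1} )`,
where `J_k^ℓ = I_k^ℓ(A, g)`. -/
def refinedUB (K : Type*) [Field K] [NonUnitalRing F] [Module K F]
    [Ring A] [Algebra K A] (g : Submodule K A) : Submodule K (F ⊗[K] A) :=
  tSpan K (⊤ : Submodule K F) g ⊔
    ⨆ k₁ : ℕ, ⨆ k₂ : ℕ, ⨆ l₁ : ℕ, ⨆ l₂ : ℕ,
      (tSpan K (pSpan K (IklS K (⊤ : Submodule K F) (l₁ + 1) k₁) (IklS K ⊤ (l₂ + 1) k₂))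
          (bSpan K (IklS K g (k₁ + 1) l₁) (IklS K g (k₂ + 1) l₂)) ⊔
        tSpan K (bSpan K (IklS K (⊤ : Submodule K F) (l₁ + 1) k₁) (IklS K ⊤ (l₂ + 1) k₂))
          (pSpan K (IklS K g (k₂ + 1) l₂) (IklS K g (k₁ + 1) l₁)))

/-!
Let `P = ⨆ I_k^{l+1}(F) ⊗ I_l^{k+1}(A, g)`. Since
`(ff') ⊗ (aa') - (f'f) ⊗ (a'a) = ff' ⊗ [a, a'] + [f, f'] ⊗ a'a`, the commutators of elements of `P`
lie in `refinedUB`. Conversely `refinedUB ≤ P`, because `I_k^l I_n^m ≤ I_{k+n}^{l+m}` and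
`[I_k^{l+1}, I_n^{m+1}] ≤ I_{k+n+1}^{l+m+1}`; hence `refinedUB` is a Lie subalgebra.
The second inclusion factors through `[S, I_{k+n}^{l+m+1}]`, and it is this sharper form that bounds
`refinedUB` by `tildeUB`. It comes from the Jacobi identity and from the cyclic identity
`[xy, z] = [x, yz] + [y, zx]`, which moves all factors but one into the second slot.
-/

section Bilinear

variable {R M N P Q L : Type*} [CommSemiring R] [AddCommMonoid M] [AddCommMonoid N]
  [AddCommMonoid P] [AddCommMonoid Q] [AddCommMonoid L] [Module R M] [Module R N] [Module R P]
  [Module R Q] [Module R L]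

theorem map₂_map₂_left_le {f : P →ₗ[R] Q →ₗ[R] L} {h : M →ₗ[R] N →ₗ[R] P} {p : Submodule R M}
    {q : Submodule R N} {r : Submodule R Q} {s : Submodule R L} :
    map₂ f (map₂ h p q) r ≤ s ↔ ∀ m ∈ p, ∀ n ∈ q, ∀ x ∈ r, f (h m n) x ∈ s := by
  refine ⟨fun H m hm n hn x hx ↦ H (apply_mem_map₂ f (apply_mem_map₂ h hm hn) hx), fun H ↦ ?_⟩
  refine map₂_le.2 fun y hy x hx ↦ ?_
  have hle : map₂ h p q ≤ s.comap (f.flip x) := map₂_le.2 fun m hm n hn ↦ H m hm n hn x hx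
  exact hle hy

end Bilinear

section Spans

variable {K} {R : Type*} [NonUnitalRing R] [Module K R]

theorem mul_mem_pSpan {S T : Submodule K R} {a b : R} (ha : a ∈ S) (hb : b ∈ T) :
    a * b ∈ pSpan K S T :=
  subset_span ⟨a, ha, b, hb, rfl⟩

theorem commutator_mem_bSpan {S T : Submodule K R} {a b : R} (ha : a ∈ S) (hb : b ∈ T) :
    a * b - b * a ∈ bSpan K S T :=
  subset_span ⟨a, ha, b, hb, rfl⟩

theorem bSpan_le {S T U : Submodule K R} :
    bSpan K S T ≤ U ↔ ∀ a ∈ S, ∀ b ∈ T, a * b - b * a ∈ U := by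
  refine ⟨fun h a ha b hb ↦ h (commutator_mem_bSpan ha hb), fun h ↦ span_le.2 ?_⟩
  rintro _ ⟨a, ha, b, hb, rfl⟩
  exact h a ha b hb

@[gcongr]
theorem pSpan_mono {S S' T T' : Submodule K R} (hS : S ≤ S') (hT : T ≤ T') :
    pSpan K S T ≤ pSpan K S' T' := by
  refine span_mono ?_
  rintro _ ⟨a, ha, b, hb, rfl⟩
  exact ⟨a, hS ha, b, hT hb, rfl⟩

@[gcongr]
theorem bSpan_mono {S S' T T' : Submodule K R} (hS : S ≤ S') (hT : T ≤ T') :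
    bSpan K S T ≤ bSpan K S' T' :=
  bSpan_le.2 fun _ ha _ hb ↦ commutator_mem_bSpan (hS ha) (hT hb)

theorem bSpan_comm (S T : Submodule K R) : bSpan K S T = bSpan K T S := by
  have hle (S T : Submodule K R) : bSpan K S T ≤ bSpan K T S :=
    bSpan_le.2 fun a ha b hb ↦ by
      simpa only [neg_sub] using neg_mem (commutator_mem_bSpan hb ha)
  exact le_antisymm (hle S T) (hle T S)

theorem pSpan_bot_left (T : Submodule K R) : pSpan K ⊥ T = ⊥ := by
  refine eq_bot_iff.2 (span_le.2 ?_)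
  rintro _ ⟨a, ha, b, -, rfl⟩
  rw [SetLike.mem_coe, mem_bot, (mem_bot K).1 ha, zero_mul]

theorem pSpan_bot_right (S : Submodule K R) : pSpan K S ⊥ = ⊥ := by
  refine eq_bot_iff.2 (span_le.2 ?_)
  rintro _ ⟨a, -, b, hb, rfl⟩
  rw [SetLike.mem_coe, mem_bot, (mem_bot K).1 hb, mul_zero]

theorem bSpan_bot_right (S : Submodule K R) : bSpan K S ⊥ = ⊥ := by
  refine eq_bot_iff.2 (bSpan_le.2 fun a _ b hb ↦ ?_)
  rw [(mem_bot K).1 hb, mul_zero, zero_mul, sub_zero, mem_bot]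

theorem lieGen_le {S T : Submodule K R} (hS : S ≤ T) (hT : bSpan K T T ≤ T) : lieGen K S ≤ T :=
  sInf_le ⟨hS, bSpan_le.1 hT⟩

variable [SMulCommClass K R R] [IsScalarTower K R R]

variable (K R) in
/-- The commutator `(a, b) ↦ a * b - b * a` as a bilinear map, so that `bSpan` becomes a
`Submodule.map₂`. -/
def commutatorMap : R →ₗ[K] R →ₗ[K] R :=
  LinearMap.mul K R - (LinearMap.mul K R).flip

theorem commutatorMap_apply (a b : R) : commutatorMap K R a b = a * b - b * a := rfl

theorem pSpan_eq_map₂ (S T : Submodule K R) : pSpan K S T = map₂ (LinearMap.mul K R) S T := by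
  rw [map₂_eq_span_image2, pSpan]
  simp only [Set.image2, LinearMap.mul_apply', SetLike.mem_coe, eq_comm]

theorem bSpan_eq_map₂ (S T : Submodule K R) : bSpan K S T = map₂ (commutatorMap K R) S T := by
  rw [map₂_eq_span_image2, bSpan]
  simp only [Set.image2, commutatorMap_apply, SetLike.mem_coe, eq_comm]

theorem pSpan_iSup_left {ι : Sort*} (S : ι → Submodule K R) (T : Submodule K R) :
    pSpan K (⨆ i, S i) T = ⨆ i, pSpan K (S i) T := by
  simp only [pSpan_eq_map₂, map₂_iSup_left]

theorem bSpan_iSup_left {ι : Sort*} (S : ι → Submodule K R) (T : Submodule K R) :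
    bSpan K (⨆ i, S i) T = ⨆ i, bSpan K (S i) T := by
  simp only [bSpan_eq_map₂, map₂_iSup_left]

theorem bSpan_iSup_right {ι : Sort*} (S : Submodule K R) (T : ι → Submodule K R) :
    bSpan K S (⨆ i, T i) = ⨆ i, bSpan K S (T i) := by
  simp only [bSpan_eq_map₂, map₂_iSup_right]

theorem pSpan_pSpan_le (S T U : Submodule K R) :
    pSpan K (pSpan K S T) U ≤ pSpan K S (pSpan K T U) := by
  rw [pSpan_eq_map₂ (pSpan K S T), pSpan_eq_map₂ S T]
  refine map₂_map₂_left_le.2 fun s hs t ht u hu ↦ ?_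
  simpa only [LinearMap.mul_apply', mul_assoc] using mul_mem_pSpan hs (mul_mem_pSpan ht hu)

theorem bSpan_pSpan_right_le (S T U : Submodule K R) :
    bSpan K S (pSpan K T U) ≤ pSpan K (bSpan K S T) U ⊔ pSpan K T (bSpan K S U) := by
  rw [bSpan_comm, bSpan_eq_map₂ (pSpan K T U), pSpan_eq_map₂ T U]
  refine map₂_map₂_left_le.2 fun t ht u hu s hs ↦ ?_
  have leibniz : t * u * s - s * (t * u) = -(s * t - t * s) * u + -(t * (s * u - u * s)) := by
    noncomm_ring
  rw [commutatorMap_apply, LinearMap.mul_apply', leibniz]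
  exact add_mem_sup (mul_mem_pSpan (neg_mem (commutator_mem_bSpan hs ht)) hu)
    (neg_mem (mul_mem_pSpan ht (commutator_mem_bSpan hs hu)))

theorem bSpan_pSpan_left_le (S T U : Submodule K R) :
    bSpan K (pSpan K S T) U ≤ bSpan K S (pSpan K T U) ⊔ bSpan K T (pSpan K U S) := by
  rw [bSpan_eq_map₂ (pSpan K S T), pSpan_eq_map₂ S T]
  refine map₂_map₂_left_le.2 fun s hs t ht u hu ↦ ?_
  have cyclic : s * t * u - u * (s * t) =
      (s * (t * u) - t * u * s) + (t * (u * s) - u * s * t) := by noncomm_ring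
  rw [commutatorMap_apply, LinearMap.mul_apply', cyclic]
  exact add_mem_sup (commutator_mem_bSpan hs (mul_mem_pSpan ht hu))
    (commutator_mem_bSpan ht (mul_mem_pSpan hu hs))

theorem bSpan_bSpan_left_le (S T U : Submodule K R) :
    bSpan K (bSpan K S T) U ≤ bSpan K S (bSpan K T U) ⊔ bSpan K T (bSpan K S U) := by
  rw [bSpan_eq_map₂ (bSpan K S T), bSpan_eq_map₂ S T]
  refine map₂_map₂_left_le.2 fun s hs t ht u hu ↦ ?_
  have jacobi : (s * t - t * s) * u - u * (s * t - t * s) =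
      (s * (t * u - u * t) - (t * u - u * t) * s) +
        -(t * (s * u - u * s) - (s * u - u * s) * t) := by noncomm_ring
  rw [commutatorMap_apply, commutatorMap_apply, jacobi]
  exact add_mem_sup (commutator_mem_bSpan hs (commutator_mem_bSpan ht hu))
    (neg_mem (commutator_mem_bSpan ht (commutator_mem_bSpan hs hu)))

end Spans

section CommutatorProducts

variable {K} {R : Type*} [NonUnitalRing R] [Module K R] (S : Submodule K R)

theorem IklS_top_le_Ik (l k : ℕ) : IklS K (⊤ : Submodule K R) (l + 1) k ≤ Ik K R k :=
  le_iSup (fun l ↦ IklS K (⊤ : Submodule K R) (l + 1) k) l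

theorem IklS_add_two (l k : ℕ) :
    IklS K S (l + 2) k =
      ⨆ (i : ℕ) (j : ℕ) (_ : i + j = k), pSpan K (cSp K S i) (IklS K S (l + 1) j) := by
  rw [IklS]
  refine le_antisymm ?_ (iSup₂_le fun i j ↦ iSup_le ?_)
  · refine Finset.sum_induction _ (· ≤ _) (fun _ _ ↦ sup_le) bot_le fun i hi ↦ ?_
    exact le_iSup₂_of_le i (k - i)
      (le_iSup_of_le (Nat.add_sub_cancel' (Finset.mem_range_succ_iff.1 hi)) le_rfl)
  · rintro rfl
    refine le_trans ?_ (Finset.single_le_sum (fun _ _ ↦ bot_le)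
      (Finset.mem_range_succ_iff.2 (Nat.le_add_right i j)))
    rw [Nat.add_sub_cancel_left]

theorem pSpan_cSp_IklS_le (l i j : ℕ) :
    pSpan K (cSp K S i) (IklS K S l j) ≤ IklS K S (l + 1) (i + j) := by
  cases l with
  | zero => exact (pSpan_bot_right _).trans_le bot_le
  | succ l =>
    rw [IklS_add_two]
    exact le_iSup₂_of_le i j (le_iSup_of_le rfl le_rfl)

variable [SMulCommClass K R R] [IsScalarTower K R R]

theorem pSpan_IklS_IklS_le (l m k n : ℕ) :
    pSpan K (IklS K S l k) (IklS K S m n) ≤ IklS K S (l + m) (k + n) := by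
  induction l using Nat.twoStepInduction generalizing k with
  | zero => exact (pSpan_bot_left _).trans_le bot_le
  | one => exact (pSpan_cSp_IklS_le S m k n).trans_eq (by rw [add_comm])
  | more l _ ih =>
    simp only [IklS_add_two S l, pSpan_iSup_left, iSup_le_iff]
    rintro i j rfl
    calc
      _ ≤ pSpan K (cSp K S i) (pSpan K (IklS K S (l + 1) j) (IklS K S m n)) := pSpan_pSpan_le ..
      _ ≤ pSpan K (cSp K S i) (IklS K S (l + 1 + m) (j + n)) := by gcongr; exact ih j
      _ ≤ IklS K S (l + 1 + m + 1) (i + (j + n)) := pSpan_cSp_IklS_le ..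
      _ = IklS K S (l + 2 + m) (i + j + n) := by congr 1 <;> omega

theorem bSpan_IklS_le (l k : ℕ) : bSpan K S (IklS K S l k) ≤ IklS K S l (k + 1) := by
  induction l using Nat.twoStepInduction generalizing k with
  | zero => exact (bSpan_bot_right S).le
  | one => exact le_rfl
  | more l _ ih =>
    simp only [IklS_add_two S l k, bSpan_iSup_right, iSup_le_iff]
    rintro i j rfl
    refine (bSpan_pSpan_right_le ..).trans (sup_le ?_ ?_)
    · calc
        _ ≤ IklS K S (l + 2) (i + 1 + j) := pSpan_cSp_IklS_le S (l + 1) (i + 1) j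
        _ = IklS K S (l + 2) (i + j + 1) := by rw [add_right_comm]
    · calc
        _ ≤ pSpan K (cSp K S i) (IklS K S (l + 1) (j + 1)) := by gcongr; exact ih j
        _ ≤ IklS K S (l + 2) (i + j + 1) := pSpan_cSp_IklS_le ..

theorem bSpan_cSp_IklS_le (i l k : ℕ) :
    bSpan K (cSp K S i) (IklS K S l k) ≤ bSpan K S (IklS K S l (i + k)) := by
  induction i generalizing k with
  | zero => rw [zero_add, cSp]
  | succ i ih =>
    refine (bSpan_bSpan_left_le ..).trans (sup_le ?_ ?_)
    · gcongr
      calc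
        _ ≤ bSpan K S (IklS K S l (i + k)) := ih k
        _ ≤ IklS K S l (i + k + 1) := bSpan_IklS_le ..
        _ = IklS K S l (i + 1 + k) := by rw [add_right_comm]
    · calc
        _ ≤ bSpan K (cSp K S i) (IklS K S l (k + 1)) := by gcongr; exact bSpan_IklS_le ..
        _ ≤ bSpan K S (IklS K S l (i + (k + 1))) := ih (k + 1)
        _ = bSpan K S (IklS K S l (i + 1 + k)) := by rw [← add_assoc, add_right_comm]

theorem bSpan_IklS_IklS_le_bSpan (l m k n : ℕ) :
    bSpan K (IklS K S (l + 1) k) (IklS K S (m + 1) n) ≤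
      bSpan K S (IklS K S (l + m + 1) (k + n)) := by
  induction l generalizing k m n with
  | zero => rw [zero_add m]; exact bSpan_cSp_IklS_le ..
  | succ l ih =>
    simp only [IklS_add_two S l k, bSpan_iSup_left, iSup_le_iff]
    rintro i j rfl
    refine (bSpan_pSpan_left_le ..).trans (sup_le ?_ ?_)
    · calc
        _ ≤ bSpan K (cSp K S i) (IklS K S (l + 1 + (m + 1)) (j + n)) := by
          gcongr; exact pSpan_IklS_IklS_le ..
        _ ≤ bSpan K S (IklS K S (l + 1 + (m + 1)) (i + (j + n))) := bSpan_cSp_IklS_le ..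
        _ = bSpan K S (IklS K S (l + 1 + m + 1) (i + j + n)) := by simp only [add_assoc]
    · calc
        _ ≤ bSpan K (IklS K S (l + 1) j) (IklS K S (m + 1 + 1) (n + i)) := by
          gcongr; exact pSpan_IklS_IklS_le S (m + 1) 1 n i
        _ ≤ bSpan K S (IklS K S (l + (m + 1) + 1) (j + (n + i))) := ih ..
        _ = bSpan K S (IklS K S (l + 1 + m + 1) (i + j + n)) := by congr 2 <;> omega

theorem bSpan_IklS_IklS_le (l m k n : ℕ) :
    bSpan K (IklS K S (l + 1) k) (IklS K S (m + 1) n) ≤ IklS K S (l + m + 1) (k + n + 1) :=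
  (bSpan_IklS_IklS_le_bSpan ..).trans (bSpan_IklS_le ..)

end CommutatorProducts

section Powers

variable {K} {R : Type*} [NonUnitalRing R] [Module K R] (g : Submodule K R)

theorem pSpan_self_gPow_le (n : ℕ) : pSpan K g (gPow K g n) ≤ gPow K g (n + 1) := by
  cases n with
  | zero => exact (pSpan_bot_right g).trans_le bot_le
  | succ n => exact le_rfl

variable {g} in
theorem cSp_le_self (hg : bSpan K g g ≤ g) (i : ℕ) : cSp K g i ≤ g := by
  induction i with
  | zero => exact le_rfl
  | succ i ih => exact (bSpan_mono le_rfl ih).trans hg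

variable {g} in
theorem IklS_le_gPow (hg : bSpan K g g ≤ g) (l k : ℕ) : IklS K g l k ≤ gPow K g l := by
  induction l using Nat.twoStepInduction generalizing k with
  | zero => exact le_rfl
  | one => exact cSp_le_self hg k
  | more l _ ih =>
    simp only [IklS_add_two g l k, iSup_le_iff]
    exact fun i j _ ↦ pSpan_mono (cSp_le_self hg i) (ih j)

variable [SMulCommClass K R R] [IsScalarTower K R R]

theorem pSpan_gPow_gPow_le (m n : ℕ) :
    pSpan K (gPow K g m) (gPow K g n) ≤ gPow K g (m + n) := by
  induction m using Nat.twoStepInduction with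
  | zero => exact (pSpan_bot_left _).trans_le bot_le
  | one => exact (pSpan_self_gPow_le g n).trans_eq (by rw [add_comm])
  | more m _ ih =>
    calc
      _ ≤ pSpan K g (pSpan K (gPow K g (m + 1)) (gPow K g n)) := pSpan_pSpan_le ..
      _ ≤ pSpan K g (gPow K g (m + 1 + n)) := by gcongr
      _ ≤ gPow K g (m + 1 + n + 1) := pSpan_self_gPow_le ..
      _ = gPow K g (m + 2 + n) := by rw [add_right_comm]

theorem bSpan_gPow_gPow_le (m n : ℕ) :
    bSpan K (gPow K g (m + 1)) (gPow K g (n + 1)) ≤ bSpan K g (gPow K g (m + n + 1)) := by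
  induction m generalizing n with
  | zero => rw [zero_add n]; exact le_rfl
  | succ m ih =>
    refine (bSpan_pSpan_left_le ..).trans (sup_le ?_ ?_)
    · gcongr
      calc
        _ ≤ gPow K g (m + 1 + (n + 1)) := pSpan_gPow_gPow_le ..
        _ = gPow K g (m + 1 + n + 1) := by rw [← add_assoc]
    · calc
        _ ≤ bSpan K (gPow K g (m + 1)) (gPow K g (n + 1 + 1)) := by
          gcongr; exact pSpan_gPow_gPow_le g (n + 1) 1
        _ ≤ bSpan K g (gPow K g (m + (n + 1) + 1)) := ih (n + 1)
        _ = bSpan K g (gPow K g (m + 1 + n + 1)) := by congr 2; omega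

end Powers

section TensorSpans

variable {K}

section Module

variable [AddCommGroup F] [Module K F] [AddCommGroup A] [Module K A]

theorem tmul_mem_tSpan {S : Submodule K F} {T : Submodule K A} {f : F} {a : A} (hf : f ∈ S)
    (ha : a ∈ T) : f ⊗ₜ[K] a ∈ tSpan K S T :=
  subset_span ⟨f, hf, a, ha, rfl⟩

@[gcongr]
theorem tSpan_mono {S S' : Submodule K F} {T T' : Submodule K A} (hS : S ≤ S') (hT : T ≤ T') :
    tSpan K S T ≤ tSpan K S' T' := by
  refine span_mono ?_
  rintro _ ⟨f, hf, a, ha, rfl⟩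
  exact ⟨f, hS hf, a, hT ha, rfl⟩

end Module

theorem bSpan_tSpan_tSpan_le [NonUnitalRing F] [Module K F] [SMulCommClass K F F]
    [IsScalarTower K F F] [Ring A] [Algebra K A] (S S' : Submodule K F) (T T' : Submodule K A) :
    bSpan K (tSpan K S T) (tSpan K S' T') ≤
      tSpan K (pSpan K S S') (bSpan K T T') ⊔ tSpan K (bSpan K S S') (pSpan K T' T) := by
  rw [bSpan_eq_map₂ (tSpan K S T), tSpan, tSpan, map₂_span_span, span_le]
  rintro _ ⟨_, ⟨f, hf, a, ha, rfl⟩, _, ⟨f', hf', a', ha', rfl⟩, rfl⟩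
  have commutator_tmul : (f * f') ⊗ₜ[K] (a * a') - (f' * f) ⊗ₜ[K] (a' * a) =
      (f * f') ⊗ₜ[K] (a * a' - a' * a) + (f * f' - f' * f) ⊗ₜ[K] (a' * a) := by
    rw [tmul_sub, sub_tmul, sub_add_sub_cancel]
  simp only [commutatorMap_apply, Algebra.TensorProduct.tmul_mul_tmul, commutator_tmul]
  exact add_mem_sup
    (tmul_mem_tSpan (mul_mem_pSpan hf hf') (commutator_mem_bSpan ha ha'))
    (tmul_mem_tSpan (commutator_mem_bSpan hf hf') (mul_mem_pSpan ha' ha))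

end TensorSpans

section UpperBounds

variable {K} [NonUnitalRing F] [Module K F] [Ring A] [Algebra K A] (g : Submodule K A)

variable (F) in
/-- The subspace `Σ_{k, l ≥ 0} I_k^{l+1}(F) ⊗ I_l^{k+1}(A, g)` of `F ⊗ A`. It contains `refinedUB`,
which in turn contains its commutators. -/
def diagonalHull : Submodule K (F ⊗[K] A) :=
  ⨆ (k : ℕ) (l : ℕ), tSpan K (IklS K (⊤ : Submodule K F) (l + 1) k) (IklS K g (k + 1) l)

theorem tSpan_le_diagonalHull (k l : ℕ) :
    tSpan K (IklS K (⊤ : Submodule K F) (l + 1) k) (IklS K g (k + 1) l) ≤ diagonalHull F g :=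
  le_iSup₂_of_le k l le_rfl

theorem refinedUB_le_iff {U : Submodule K (F ⊗[K] A)} :
    refinedUB K g ≤ U ↔ tSpan K ⊤ g ≤ U ∧ ∀ k₁ k₂ l₁ l₂ : ℕ,
      tSpan K (pSpan K (IklS K ⊤ (l₁ + 1) k₁) (IklS K ⊤ (l₂ + 1) k₂))
          (bSpan K (IklS K g (k₁ + 1) l₁) (IklS K g (k₂ + 1) l₂)) ≤ U ∧
        tSpan K (bSpan K (IklS K ⊤ (l₁ + 1) k₁) (IklS K ⊤ (l₂ + 1) k₂))
          (pSpan K (IklS K g (k₂ + 1) l₂) (IklS K g (k₁ + 1) l₁)) ≤ U := by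
  simp only [refinedUB, sup_le_iff, iSup_le_iff]

theorem tSpan_bSpan_le_tildeUB (k : ℕ) :
    tSpan K (bSpan K (⊤ : Submodule K F) (Ik K F k)) (gPow K g (k + 2)) ≤ tildeUB K g :=
  le_sup_of_le_right (le_iSup_of_le k le_sup_right)

variable {g} in
theorem tSpan_Ik_le_tildeUB (hg : bSpan K g g ≤ g) (k : ℕ) :
    tSpan K (Ik K F k) (bSpan K g (gPow K g (k + 1))) ≤ tildeUB K g := by
  cases k with
  | zero => exact le_sup_of_le_left (tSpan_mono le_top hg)
  | succ k => exact le_sup_of_le_right (le_iSup_of_le k le_sup_left)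

variable [SMulCommClass K F F] [IsScalarTower K F F]

theorem refinedUB_le_diagonalHull : refinedUB K g ≤ diagonalHull F g := by
  refine (refinedUB_le_iff g).2 ⟨tSpan_le_diagonalHull g 0 0, fun k₁ k₂ l₁ l₂ ↦ ⟨?_, ?_⟩⟩
  · calc
      _ ≤ tSpan K (IklS K ⊤ (l₁ + 1 + (l₂ + 1)) (k₁ + k₂))
            (IklS K g (k₁ + k₂ + 1) (l₁ + l₂ + 1)) :=
          tSpan_mono (pSpan_IklS_IklS_le ..) (bSpan_IklS_IklS_le ..)
      _ = tSpan K (IklS K ⊤ (l₁ + l₂ + 1 + 1) (k₁ + k₂))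
            (IklS K g (k₁ + k₂ + 1) (l₁ + l₂ + 1)) := by congr 2; omega
      _ ≤ diagonalHull F g := tSpan_le_diagonalHull g (k₁ + k₂) (l₁ + l₂ + 1)
  · calc
      _ ≤ tSpan K (IklS K ⊤ (l₁ + l₂ + 1) (k₁ + k₂ + 1))
            (IklS K g (k₂ + 1 + (k₁ + 1)) (l₂ + l₁)) :=
          tSpan_mono (bSpan_IklS_IklS_le ..) (pSpan_IklS_IklS_le ..)
      _ = tSpan K (IklS K ⊤ (l₁ + l₂ + 1) (k₁ + k₂ + 1))
            (IklS K g (k₁ + k₂ + 1 + 1) (l₁ + l₂)) := by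
          congr 2 <;> omega
      _ ≤ diagonalHull F g := tSpan_le_diagonalHull g (k₁ + k₂ + 1) (l₁ + l₂)

theorem bSpan_diagonalHull_le_refinedUB :
    bSpan K (diagonalHull F g) (diagonalHull F g) ≤ refinedUB K g := by
  conv_lhs => simp only [diagonalHull, bSpan_iSup_left, bSpan_iSup_right]
  simp only [iSup_le_iff]
  intro k₂ l₂ k₁ l₁
  obtain ⟨hp, hb⟩ := ((refinedUB_le_iff (F := F) g).1 le_rfl).2 k₁ k₂ l₁ l₂
  exact (bSpan_tSpan_tSpan_le ..).trans (sup_le hp hb)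

theorem bSpan_refinedUB_le :
    bSpan K (refinedUB (F := F) K g) (refinedUB (F := F) K g) ≤ refinedUB (F := F) K g :=
  calc
    _ ≤ bSpan K (diagonalHull F g) (diagonalHull F g) :=
      bSpan_mono (refinedUB_le_diagonalHull g) (refinedUB_le_diagonalHull g)
    _ ≤ refinedUB K g := bSpan_diagonalHull_le_refinedUB g

variable {g} in
theorem refinedUB_le_tildeUB (hg : bSpan K g g ≤ g) :
    refinedUB (F := F) K g ≤ tildeUB K g := by
  refine (refinedUB_le_iff g).2 ⟨le_sup_left, fun k₁ k₂ l₁ l₂ ↦ ⟨?_, ?_⟩⟩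
  · refine le_trans (tSpan_mono ?_ ?_) (tSpan_Ik_le_tildeUB hg (k₁ + k₂))
    · calc
        _ ≤ IklS K ⊤ (l₁ + 1 + (l₂ + 1)) (k₁ + k₂) := pSpan_IklS_IklS_le ..
        _ ≤ Ik K F (k₁ + k₂) := IklS_top_le_Ik (l₁ + 1 + l₂) _
    · calc
        _ ≤ bSpan K (gPow K g (k₁ + 1)) (gPow K g (k₂ + 1)) :=
          bSpan_mono (IklS_le_gPow hg ..) (IklS_le_gPow hg ..)
        _ ≤ bSpan K g (gPow K g (k₁ + k₂ + 1)) := bSpan_gPow_gPow_le ..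
  · refine le_trans (tSpan_mono ?_ ?_) (tSpan_bSpan_le_tildeUB g (k₁ + k₂))
    · calc
        _ ≤ bSpan K ⊤ (IklS K ⊤ (l₁ + l₂ + 1) (k₁ + k₂)) := bSpan_IklS_IklS_le_bSpan ..
        _ ≤ bSpan K ⊤ (Ik K F (k₁ + k₂)) := bSpan_mono le_rfl (IklS_top_le_Ik ..)
    · calc
        _ ≤ pSpan K (gPow K g (k₂ + 1)) (gPow K g (k₁ + 1)) :=
          pSpan_mono (IklS_le_gPow hg ..) (IklS_le_gPow hg ..)
        _ ≤ gPow K g (k₂ + 1 + (k₁ + 1)) := pSpan_gPow_gPow_le ..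
        _ = gPow K g (k₁ + k₂ + 2) := by congr 1; omega

end UpperBounds

theorem statement10_general {K : Type*} [Field K]
    [NonUnitalRing F] [Module K F] [SMulCommClass K F F] [IsScalarTower K F F]
    [Ring A] [Algebra K A] (g : Submodule K A) :
    (∀ x ∈ refinedUB (F := F) K g, ∀ y ∈ refinedUB (F := F) K g,
        x * y - y * x ∈ refinedUB (F := F) K g) ∧
    currentLie K (F := F) g ≤ refinedUB (F := F) K g ∧
    ((∀ x ∈ g, ∀ y ∈ g, x * y - y * x ∈ g) → refinedUB (F := F) K g ≤ tildeUB (F := F) K g) :=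
  ⟨bSpan_le.1 (bSpan_refinedUB_le g), lieGen_le le_sup_left (bSpan_refinedUB_le g),
    fun hg ↦ refinedUB_le_tildeUB (bSpan_le.2 hg)⟩

/-- the refined upper bound `overline(g,A)(F)` is a Lie subalgebra of
`F ⊗ A` and `(g,A)(F) ⊆ overline(g,A)(F) ⊆ tilde(g,A)(F)`. -/
theorem statement10 {K : Type*} [Field K] [CharZero K]
    [NonUnitalRing F] [Module K F] [SMulCommClass K F F] [IsScalarTower K F F]
    [Ring A] [Algebra K A]
    (g : Submodule K A) (hg : ∀ x ∈ g, ∀ y ∈ g, x * y - y * x ∈ g) :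
    (∀ x ∈ refinedUB (F := F) K g, ∀ y ∈ refinedUB (F := F) K g,
        x * y - y * x ∈ refinedUB (F := F) K g) ∧
    currentLie K (F := F) g ≤ refinedUB (F := F) K g ∧
    refinedUB (F := F) K g ≤ tildeUB (F := F) K g := by
  obtain ⟨hlie, hcurrent, htilde⟩ := statement10_general (F := F) g
  exact ⟨hlie, hcurrent, htilde hg⟩
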